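/- Let V ∈ L^∞(ℝ) with v₀ := ess inf_{x∈ℝ} V(x) > 0 and v₁ := ess sup_{x∈ℝ} V(x), fix a ∈ ℝ, and let u_a ∈ K_a be the unique minimizer of u ↦ ‖u‖_V² over K_a. Then e^{−√v₁ |x−a|} ≤ u_a(x) ≤ e^{−√v₀ |x−a|} holds for all x ∈ ℝ. -/

import Mathlib

open MeasureTheory Filter Real Topology

/-- The supremum norm `‖u‖_∞` of a (bounded continuous) function `u : ℝ → ℝ`. -/
noncomputable def supNorm (u : ℝ → ℝ) : ℝ := ⨆ x : ℝ, |u x|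

/-- `u` is (the continuous representative of) an element of `H¹(ℝ)`:
`u` is continuous, `u ∈ L²(ℝ)`, and there is a weak derivative `u' ∈ L²(ℝ)`,
i.e. `u x = u 0 + ∫_0^x u'`. -/
def IsH1 (u : ℝ → ℝ) : Prop :=
  Continuous u ∧ MemLp u 2 (volume : Measure ℝ) ∧
    ∃ u' : ℝ → ℝ, MemLp u' 2 (volume : Measure ℝ) ∧
      ∀ x : ℝ, u x = u 0 + ∫ t in (0:ℝ)..x, u' t

/-- The Dirichlet energy `∫_ℝ |u'(x)|² dx`.  (For `u ∈ H¹(ℝ)` the classical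
derivative `deriv u` exists a.e. and coincides a.e. with the weak derivative.) -/
noncomputable def energy (u : ℝ → ℝ) : ℝ := ∫ x : ℝ, (deriv u x) ^ 2

/-- `I(u;V) = ∫_ℝ (|u'(x)|² + V(x)|u(x)|²) dx` for a potential `V : ℝ → ℝ`. -/
noncomputable def IV (V : ℝ → ℝ) (u : ℝ → ℝ) : ℝ :=
  ∫ x : ℝ, ((deriv u x) ^ 2 + V x * (u x) ^ 2)

/-- Membership in `K_a = { u ∈ H¹(ℝ) ; u(a) = ‖u‖_∞ = 1 }`. -/
def InKa (a : ℝ) (u : ℝ → ℝ) : Prop := IsH1 u ∧ u a = 1 ∧ supNorm u = 1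

/-- `F(a;V) = inf { I(u;V) ; u ∈ K_a }`. -/
noncomputable def FV (V : ℝ → ℝ) (a : ℝ) : ℝ :=
  sInf {r : ℝ | ∃ u : ℝ → ℝ, InKa a u ∧ r = IV V u}

/-- `m(V) = inf { I(u;V)/‖u‖_∞² ; u ∈ H¹(ℝ), u ≢ 0 }`. -/
noncomputable def mV (V : ℝ → ℝ) : ℝ :=
  sInf {r : ℝ | ∃ u : ℝ → ℝ, IsH1 u ∧ u ≠ 0 ∧ r = IV V u / (supNorm u) ^ 2}

/-!
Write `w = e^{-k|x-a|}`, the Green function of `-d²/dx² + k²` up to a factor: its pairing with any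
`p ∈ H¹` in the form `∫ (w' p' + k² w p)` is `2 k p(a)`. If `p(a) = 0` and `(V - k²) p ≥ 0`, then
the form with potential `V` pairs `w` and `p` nonnegatively, so that `I(w) + I(p) ≤ I(w + p)`.

The energy satisfies `I(u ⊔ w) + I(u ⊓ w) = I(u) + I(w)` and `K_a` is a lattice containing `w`.
Hence minimality of `u` against `u ⊓ w` gives `I(u ⊔ w) ≤ I(w)`, and the inequality above for
`p = u ⊔ w - w ≥ 0` forces `p = 0` when `k² ≤ V`, that is `u ≤ w`. Exchanging `⊔` and `⊓` gives
`w ≤ u` when `V ≤ k²`.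
-/

section AbsolutelyContinuous

variable {f g : ℝ → ℝ}

lemma continuous_of_forall_absolutelyContinuousOnInterval
    (hf : ∀ b c, AbsolutelyContinuousOnInterval f b c) : Continuous f := by
  refine continuous_iff_continuousAt.2 fun x ↦ (hf (x - 1) (x + 1)).continuousOn.continuousAt ?_
  rw [Set.uIcc_of_le (by linarith)]
  exact Icc_mem_nhds (by linarith) (by linarith)

lemma ae_differentiableAt_of_forall_absolutelyContinuousOnInterval
    (hf : ∀ b c, AbsolutelyContinuousOnInterval f b c) : ∀ᵐ x, DifferentiableAt ℝ f x := by
  have hmem : ∀ᵐ x, ∀ n : ℕ, x ∈ Set.uIcc (-(n : ℝ)) n → DifferentiableAt ℝ f x :=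
    ae_all_iff.2 fun n ↦ (hf _ _).ae_differentiableAt
  filter_upwards [hmem] with x hx
  obtain ⟨n, hn⟩ := exists_nat_ge |x|
  refine hx n ?_
  rw [Set.uIcc_of_le (by linarith [abs_nonneg x])]
  exact abs_le.1 hn

lemma absolutelyContinuousOnInterval_sup {b c : ℝ} (hf : AbsolutelyContinuousOnInterval f b c)
    (hg : AbsolutelyContinuousOnInterval g b c) :
    AbsolutelyContinuousOnInterval (f ⊔ g) b c := by
  refine squeeze_zero (fun E ↦ Finset.sum_nonneg fun i _ ↦ dist_nonneg) (fun E ↦ ?_)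
    (by simpa using Tendsto.add hf hg)
  rw [← Finset.sum_add_distrib]
  refine Finset.sum_le_sum fun i _ ↦ ?_
  simp only [Real.dist_eq, Pi.sup_apply]
  exact (abs_max_sub_max_le_max _ _ _ _).trans
    (max_le_add_of_nonneg (abs_nonneg _) (abs_nonneg _))

lemma integral_Ioi_deriv_of_absolutelyContinuous
    (hf : ∀ b c, AbsolutelyContinuousOnInterval f b c) (hfi : Integrable f)
    (hfi' : Integrable (deriv f)) (a : ℝ) : ∫ x in Set.Ioi a, deriv f x = -f a := by
  have hlim : Tendsto f atTop (𝓝 (f a + ∫ x in Set.Ioi a, deriv f x)) := by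
    simpa [(hf a _).integral_deriv_eq_sub] using
      (intervalIntegral_tendsto_integral_Ioi a hfi'.integrableOn tendsto_id).const_add (f a)
  have hzero := (hfi.integrableAtFilter atTop).eq_zero_of_tendsto
    (fun s hs ↦ by
      obtain ⟨b, hb⟩ := mem_atTop_sets.1 hs
      exact measure_mono_top (fun x hx ↦ hb x hx) Real.volume_Ici) hlim
  linarith

lemma integral_Iic_deriv_of_absolutelyContinuous
    (hf : ∀ b c, AbsolutelyContinuousOnInterval f b c) (hfi : Integrable f)
    (hfi' : Integrable (deriv f)) (a : ℝ) : ∫ x in Set.Iic a, deriv f x = f a := by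
  have hlim : Tendsto f atBot (𝓝 (f a - ∫ x in Set.Iic a, deriv f x)) := by
    simpa [(hf _ a).integral_deriv_eq_sub] using
      (intervalIntegral_tendsto_integral_Iic a hfi'.integrableOn tendsto_id).const_sub (f a)
  have hzero := (hfi.integrableAtFilter atBot).eq_zero_of_tendsto
    (fun s hs ↦ by
      obtain ⟨b, hb⟩ := mem_atBot_sets.1 hs
      exact measure_mono_top (fun x hx ↦ hb x hx) Real.volume_Iic) hlim
  linarith

end AbsolutelyContinuous

lemma deriv_eq_of_le_of_eq {f g : ℝ → ℝ} {x : ℝ} (hle : f ≤ g) (hx : f x = g x)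
    (hf : DifferentiableAt ℝ f x) (hg : DifferentiableAt ℝ g x) : deriv f x = deriv g x := by
  have hmin : IsLocalMin (g - f) x := Eventually.of_forall fun y ↦ by simpa [hx] using hle y
  have hderiv := hmin.deriv_eq_zero
  rw [deriv_sub hg hf] at hderiv
  linarith

lemma intervalIntegrable_of_memLp {E : Type*} [NormedAddCommGroup E] {f : ℝ → E}
    {μ : Measure ℝ} [IsLocallyFiniteMeasure μ] {p : ENNReal} (hp : 1 ≤ p) (hf : MemLp f p μ)
    (b c : ℝ) : IntervalIntegrable f μ b c :=
  intervalIntegrable_iff.2 (((hf.locallyIntegrable hp).integrableOn_isCompact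
    isCompact_uIcc).mono_set Set.uIoc_subset_uIcc)

namespace IsH1

variable {f g : ℝ → ℝ}

lemma memLp (hf : IsH1 f) : MemLp f 2 := hf.2.1

lemma absolutelyContinuousOnInterval (hf : IsH1 f) (b c : ℝ) :
    AbsolutelyContinuousOnInterval f b c := by
  obtain ⟨-, -, f', hf', hint⟩ := hf
  have hf'_int := intervalIntegrable_of_memLp one_le_two hf'
  have hac := (hf'_int b c).absolutelyContinuousOnInterval_intervalIntegral Set.left_mem_uIcc
  refine hac.congr' (Eventually.of_forall fun E ↦ Finset.sum_congr rfl fun i _ ↦ ?_)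
  have hprim : ∀ y, f y = f b + ∫ t in b..y, f' t := fun y ↦ by
    rw [hint y, hint b, add_assoc,
      intervalIntegral.integral_add_adjacent_intervals (hf'_int 0 b) (hf'_int b y)]
  rw [hprim (E.2 i).1, hprim (E.2 i).2, dist_add_left]

lemma memLp_deriv (hf : IsH1 f) : MemLp (deriv f) 2 := by
  obtain ⟨-, -, f', hf', hint⟩ := hf
  have hloc : LocallyIntegrable f' := hf'.locallyIntegrable one_le_two
  refine hf'.ae_eq ?_
  filter_upwards [LocallyIntegrable.ae_hasDerivAt_integral hloc] with x hx
  rw [funext hint, ((hx 0).const_add (f 0)).deriv]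

lemma of_absolutelyContinuous (hf : ∀ b c, AbsolutelyContinuousOnInterval f b c)
    (hf2 : MemLp f 2) (hf2' : MemLp (deriv f) 2) : IsH1 f :=
  ⟨continuous_of_forall_absolutelyContinuousOnInterval hf, hf2, deriv f, hf2', fun x ↦ by
    rw [(hf 0 x).integral_deriv_eq_sub, add_sub_cancel]⟩

lemma ae_differentiableAt (hf : IsH1 f) : ∀ᵐ x, DifferentiableAt ℝ f x :=
  ae_differentiableAt_of_forall_absolutelyContinuousOnInterval hf.absolutelyContinuousOnInterval

lemma deriv_add_ae_eq (hf : IsH1 f) (hg : IsH1 g) :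
    deriv (f + g) =ᵐ[volume] deriv f + deriv g := by
  filter_upwards [hf.ae_differentiableAt, hg.ae_differentiableAt] with x hfx hgx
  exact deriv_add hfx hgx

lemma add (hf : IsH1 f) (hg : IsH1 g) : IsH1 (f + g) :=
  of_absolutelyContinuous
    (fun b c ↦ (hf.absolutelyContinuousOnInterval b c).add (hg.absolutelyContinuousOnInterval b c))
    (hf.memLp.add hg.memLp) ((hf.memLp_deriv.add hg.memLp_deriv).ae_eq (hf.deriv_add_ae_eq hg).symm)

lemma neg (hf : IsH1 f) : IsH1 (-f) :=
  of_absolutelyContinuous (fun b c ↦ (hf.absolutelyContinuousOnInterval b c).neg)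
    hf.memLp.neg (deriv.neg' (f := f) ▸ hf.memLp_deriv.neg)

lemma sub (hf : IsH1 f) (hg : IsH1 g) : IsH1 (f - g) := sub_eq_add_neg f g ▸ hf.add hg.neg

lemma sup (hf : IsH1 f) (hg : IsH1 g) : IsH1 (f ⊔ g) := by
  have hac b c := absolutelyContinuousOnInterval_sup (hf.absolutelyContinuousOnInterval b c)
    (hg.absolutelyContinuousOnInterval b c)
  refine of_absolutelyContinuous hac (hf.memLp.sup hg.memLp) ?_
  refine (hf.memLp_deriv.norm.add hg.memLp_deriv.norm).of_le
    (measurable_deriv _).aestronglyMeasurable ?_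
  filter_upwards [hf.ae_differentiableAt, hg.ae_differentiableAt,
    ae_differentiableAt_of_forall_absolutelyContinuousOnInterval hac] with x hfx hgx hsx
  simp only [Pi.add_apply]
  rw [Real.norm_of_nonneg (by positivity : (0 : ℝ) ≤ ‖deriv f x‖ + ‖deriv g x‖)]
  rcases le_total (g x) (f x) with h | h
  · rw [← deriv_eq_of_le_of_eq le_sup_left (sup_eq_left.2 h).symm hfx hsx]
    exact le_add_of_nonneg_right (norm_nonneg _)
  · rw [← deriv_eq_of_le_of_eq le_sup_right (sup_eq_right.2 h).symm hgx hsx]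
    exact le_add_of_nonneg_left (norm_nonneg _)

lemma inf (hf : IsH1 f) (hg : IsH1 g) : IsH1 (f ⊓ g) := by
  simpa [neg_sup] using (hf.neg.sup hg.neg).neg

end IsH1

/-- The symmetric bilinear form `∫ (f' g' + V f g)` whose quadratic form on `H¹(ℝ)` is `IV V`. -/
noncomputable def energyForm (V f g : ℝ → ℝ) : ℝ :=
  ∫ x, (deriv f x * deriv g x + V x * (f x * g x))

section Energy

variable {V f g : ℝ → ℝ}

lemma integrable_energyForm (hV : MemLp V ⊤) (hf : IsH1 f) (hg : IsH1 g) :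
    Integrable fun x ↦ deriv f x * deriv g x + V x * (f x * g x) :=
  (hf.memLp_deriv.integrable_mul hg.memLp_deriv).add
    ((hf.memLp.integrable_mul hg.memLp).bdd_mul hV.aestronglyMeasurable
      (ae_le_lpNorm_exponent_top hV))

lemma integrable_IV (hV : MemLp V ⊤) (hf : IsH1 f) :
    Integrable fun x ↦ deriv f x ^ 2 + V x * f x ^ 2 := by
  simpa only [← pow_two] using integrable_energyForm hV hf hf

lemma IV_add (hV : MemLp V ⊤) (hf : IsH1 f) (hg : IsH1 g) :
    IV V (f + g) = IV V f + IV V g + 2 * energyForm V f g := by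
  unfold IV energyForm
  rw [← integral_const_mul, ← integral_add (integrable_IV hV hf) (integrable_IV hV hg),
    ← integral_add (by exact (integrable_IV hV hf).add (integrable_IV hV hg))
      ((integrable_energyForm hV hf hg).const_mul 2)]
  refine integral_congr_ae ?_
  filter_upwards [hf.deriv_add_ae_eq hg] with x hx
  simp only [hx, Pi.add_apply]
  ring

lemma IV_sup_add_IV_inf (hV : MemLp V ⊤) (hf : IsH1 f) (hg : IsH1 g) :
    IV V (f ⊔ g) + IV V (f ⊓ g) = IV V f + IV V g := by
  unfold IV
  rw [← integral_add (integrable_IV hV (hf.sup hg)) (integrable_IV hV (hf.inf hg)),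
    ← integral_add (integrable_IV hV hf) (integrable_IV hV hg)]
  refine integral_congr_ae ?_
  filter_upwards [hf.ae_differentiableAt, hg.ae_differentiableAt, (hf.sup hg).ae_differentiableAt,
    (hf.inf hg).ae_differentiableAt] with x hfx hgx hsx hix
  rcases le_total (g x) (f x) with h | h
  · rw [← deriv_eq_of_le_of_eq le_sup_left (sup_eq_left.2 h).symm hfx hsx,
      deriv_eq_of_le_of_eq inf_le_right (inf_eq_right.2 h) hix hgx,
      Pi.sup_apply, Pi.inf_apply, sup_eq_left.2 h, inf_eq_right.2 h]
  · rw [← deriv_eq_of_le_of_eq le_sup_right (sup_eq_right.2 h).symm hgx hsx,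
      deriv_eq_of_le_of_eq inf_le_left (inf_eq_left.2 h) hix hfx,
      Pi.sup_apply, Pi.inf_apply, sup_eq_right.2 h, inf_eq_left.2 h]
    exact add_comm _ _

lemma eq_zero_of_IV_nonpos (hV : MemLp V ⊤) (hV0 : 0 ≤ᵐ[volume] V) (hf : IsH1 f)
    (hIV : IV V f ≤ 0) : f = 0 := by
  have hnonneg : 0 ≤ᵐ[volume] fun x ↦ deriv f x ^ 2 + V x * f x ^ 2 := by
    filter_upwards [hV0] with x hx
    exact add_nonneg (sq_nonneg _) (mul_nonneg hx (sq_nonneg _))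
  have hdensity := (integral_eq_zero_iff_of_nonneg_ae hnonneg (integrable_IV hV hf)).1
    (hIV.antisymm (integral_nonneg_of_ae hnonneg))
  have hderiv : deriv f =ᵐ[volume] 0 := by
    filter_upwards [hdensity, hV0] with x hx hVx
    have hpot : 0 ≤ V x * f x ^ 2 := mul_nonneg hVx (sq_nonneg _)
    have hsum : deriv f x ^ 2 + V x * f x ^ 2 = 0 := hx
    exact pow_eq_zero_iff two_ne_zero |>.1
      ((add_eq_zero_iff_of_nonneg (sq_nonneg _) hpot).1 hsum).1
  have hconst : f = fun _ ↦ f 0 := funext fun x ↦ by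
    have hint := (hf.absolutelyContinuousOnInterval 0 x).integral_deriv_eq_sub
    rw [intervalIntegral.integral_zero_ae (hderiv.mono fun _ h _ ↦ h)] at hint
    linarith
  have hf0 : f 0 = 0 := by
    have hmem := hf.memLp
    rw [hconst, memLp_const_iff (by simp) (by simp)] at hmem
    simpa using hmem
  rw [hconst, hf0]
  rfl

end Energy

/-- The two-sided exponential `e^{-k|x-a|}`, the shape of both bounds on the minimizer;
for `k > 0` it is `2k` times the Green function of `-d²/dx² + k²` at `a`. -/
noncomputable def expDecay (k a x : ℝ) : ℝ := Real.exp (-k * |x - a|)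

section ExpDecay

variable {k a : ℝ}

@[simp]
lemma expDecay_self (k a : ℝ) : expDecay k a a = 1 := by simp [expDecay]

lemma continuous_expDecay (k a : ℝ) : Continuous (expDecay k a) := by
  unfold expDecay
  fun_prop

lemma expDecay_pos (k a x : ℝ) : 0 < expDecay k a x := Real.exp_pos _

lemma expDecay_le_one (hk : 0 ≤ k) (a x : ℝ) : expDecay k a x ≤ 1 :=
  Real.exp_le_one_iff.2 (mul_nonpos_of_nonpos_of_nonneg (neg_nonpos.2 hk) (abs_nonneg _))

lemma hasDerivAt_expDecay (k : ℝ) {a x : ℝ} (hx : x ≠ a) :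
    HasDerivAt (expDecay k a) (-k * SignType.sign (x - a) * expDecay k a x) x := by
  have habs : HasDerivAt (fun y ↦ |y - a|) (SignType.sign (x - a) : ℝ) x :=
    (hasDerivAt_abs (sub_ne_zero.2 hx)).comp_sub_const x a
  exact (habs.const_mul (-k)).exp.congr_deriv (mul_comm _ _)

lemma memLp_expDecay (hk : 0 < k) (a : ℝ) : MemLp (expDecay k a) 2 := by
  rw [memLp_two_iff_integrable_sq (continuous_expDecay k a).aestronglyMeasurable]
  have hint : Integrable fun x : ℝ ↦ Real.exp (-(2 * k) * |x|) := by
    rw [← integrableOn_univ, ← Set.Iic_union_Ioi (a := (0 : ℝ))]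
    refine .union ((integrableOn_exp_mul_Iic (by positivity : 0 < 2 * k) 0).congr_fun ?_
      measurableSet_Iic) ((integrableOn_exp_mul_Ioi (by linarith : -(2 * k) < 0) 0).congr_fun ?_
      measurableSet_Ioi)
    · intro x hx
      simp [abs_of_nonpos (Set.mem_Iic.1 hx)]
    · intro x hx
      simp [abs_of_pos (Set.mem_Ioi.1 hx)]
  refine (hint.comp_sub_right a).congr (ae_of_all _ fun x ↦ ?_)
  simp only [expDecay, ← Real.exp_nat_mul]
  congr 1
  push_cast
  ring

lemma memLp_deriv_expDecay (hk : 0 < k) (a : ℝ) : MemLp (deriv (expDecay k a)) 2 := by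
  refine ((memLp_expDecay hk a).const_mul k).of_le (measurable_deriv _).aestronglyMeasurable ?_
  filter_upwards [Measure.ae_ne volume a] with x hx
  rw [(hasDerivAt_expDecay k hx).deriv]
  rcases hx.lt_or_gt with h | h
  · simp [sign_neg (sub_neg.2 h)]
  · simp [sign_pos (sub_pos.2 h)]

lemma isH1_expDecay (hk : 0 < k) (a : ℝ) : IsH1 (expDecay k a) := by
  have hcont := continuous_expDecay k a
  have hderiv := memLp_deriv_expDecay hk a
  refine ⟨hcont, memLp_expDecay hk a, _, hderiv, fun x ↦ ?_⟩
  rw [integral_eq_of_hasDerivAt_off_countable _ _ (Set.countable_singleton a) hcont.continuousOn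
    (fun y hy ↦ (hasDerivAt_expDecay k hy.2).differentiableAt.hasDerivAt)
    (intervalIntegrable_of_memLp one_le_two hderiv 0 x), add_sub_cancel]

lemma energyForm_const_expDecay (hk : 0 < k) (a : ℝ) {p : ℝ → ℝ} (hp : IsH1 p) :
    energyForm (fun _ ↦ k ^ 2) (expDecay k a) p = 2 * k * p a := by
  have hw := isH1_expDecay hk a
  have hac b c := (hw.absolutelyContinuousOnInterval b c).mul
    (hp.absolutelyContinuousOnInterval b c)
  have hderiv : ∀ᵐ x, deriv (expDecay k a * p) x =
      deriv (expDecay k a) x * p x + expDecay k a x * deriv p x := by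
    filter_upwards [hw.ae_differentiableAt, hp.ae_differentiableAt] with x hwx hpx
    exact deriv_mul hwx hpx
  have hint : Integrable (expDecay k a * p) := hw.memLp.integrable_mul hp.memLp
  have hint' : Integrable (deriv (expDecay k a * p)) :=
    ((hw.memLp_deriv.integrable_mul hp.memLp).add
      (hw.memLp.integrable_mul hp.memLp_deriv)).congr (hderiv.mono fun _ hx ↦ hx.symm)
  have hform := integrable_energyForm (memLp_top_const (k ^ 2)) hw hp
  have hleft : ∫ x in Set.Iic a, (deriv (expDecay k a) x * deriv p x +
      k ^ 2 * (expDecay k a x * p x)) = k * p a := by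
    rw [← one_mul (p a), ← expDecay_self k a, ← Pi.mul_apply,
      ← integral_Iic_deriv_of_absolutelyContinuous hac hint hint', ← integral_const_mul]
    refine setIntegral_congr_ae measurableSet_Iic ?_
    filter_upwards [hderiv, Measure.ae_ne volume a] with x hx hxa hle
    rw [hx, (hasDerivAt_expDecay k hxa).deriv, sign_neg (sub_neg.2 (hle.lt_of_ne hxa))]
    simp only [SignType.coe_neg, SignType.coe_one]
    ring
  have hright : ∫ x in Set.Ioi a, (deriv (expDecay k a) x * deriv p x +
      k ^ 2 * (expDecay k a x * p x)) = k * p a := by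
    rw [← one_mul (p a), ← expDecay_self k a, ← Pi.mul_apply, ← neg_neg ((expDecay k a * p) a),
      ← integral_Ioi_deriv_of_absolutelyContinuous hac hint hint', mul_neg, ← neg_mul,
      ← integral_const_mul]
    refine setIntegral_congr_ae measurableSet_Ioi ?_
    filter_upwards [hderiv] with x hx hlt
    rw [hx, (hasDerivAt_expDecay k hlt.ne').deriv, sign_pos (sub_pos.2 hlt), SignType.coe_one]
    ring
  rw [energyForm, ← intervalIntegral.integral_Iic_add_Ioi hform.integrableOn hform.integrableOn,
    hleft, hright]
  ring

lemma IV_expDecay_add_le {V p : ℝ → ℝ} (hk : 0 < k) (hV : MemLp V ⊤) (hp : IsH1 p)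
    (hpa : p a = 0) (hVp : ∀ᵐ x, 0 ≤ (V x - k ^ 2) * p x) :
    IV V (expDecay k a) + IV V p ≤ IV V (expDecay k a + p) := by
  have hw := isH1_expDecay hk a
  have hform : 0 ≤ energyForm V (expDecay k a) p := calc
    0 = energyForm (fun _ ↦ k ^ 2) (expDecay k a) p := by
      rw [energyForm_const_expDecay hk a hp, hpa, mul_zero]
    _ ≤ energyForm V (expDecay k a) p := by
      refine integral_mono_ae (integrable_energyForm (memLp_top_const _) hw hp)
        (integrable_energyForm hV hw hp) ?_
      filter_upwards [hVp] with x hx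
      linarith [mul_nonneg (expDecay_pos k a x).le hx]
  rw [IV_add hV hw hp]
  linarith

lemma eq_expDecay_of_IV_le {V f : ℝ → ℝ} (hk : 0 < k) (hV : MemLp V ⊤) (hV0 : 0 ≤ᵐ[volume] V)
    (hf : IsH1 f) (hfa : f a = 1) (hVf : ∀ᵐ x, 0 ≤ (V x - k ^ 2) * (f x - expDecay k a x))
    (hIV : IV V f ≤ IV V (expDecay k a)) : f = expDecay k a := by
  have hp : IsH1 (f - expDecay k a) := hf.sub (isH1_expDecay hk a)
  have hadd := IV_expDecay_add_le (a := a) hk hV hp (by simp [hfa]) hVf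
  rw [add_sub_cancel] at hadd
  exact sub_eq_zero.1 (eq_zero_of_IV_nonpos hV hV0 hp (by linarith))

end ExpDecay

lemma inKa_iff {a : ℝ} {u : ℝ → ℝ} : InKa a u ↔ IsH1 u ∧ u a = 1 ∧ ∀ x, |u x| ≤ 1 := by
  refine and_congr_right fun _ ↦ and_congr_right fun hua ↦ ⟨fun hsup x ↦ ?_, fun hle ↦ ?_⟩
  · have hbdd : BddAbove (Set.range fun x ↦ |u x|) := by
      by_contra hunbdd
      exact zero_ne_one ((Real.iSup_of_not_bddAbove hunbdd).symm.trans hsup)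
    exact (le_ciSup hbdd x).trans_eq hsup
  · refine (ciSup_le hle).antisymm ?_
    simpa [hua] using le_ciSup (f := fun x ↦ |u x|) ⟨1, Set.forall_mem_range.2 hle⟩ a

lemma inKa_expDecay {k : ℝ} (hk : 0 < k) (a : ℝ) : InKa a (expDecay k a) :=
  inKa_iff.2 ⟨isH1_expDecay hk a, expDecay_self k a, fun x ↦ by
    simpa [abs_of_pos (expDecay_pos k a x)] using expDecay_le_one hk.le a x⟩

namespace InKa

variable {a : ℝ} {u v : ℝ → ℝ}

lemma sup (hu : InKa a u) (hv : InKa a v) : InKa a (u ⊔ v) := by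
  rw [inKa_iff] at *
  exact ⟨hu.1.sup hv.1, by simp [hu.2.1, hv.2.1], fun x ↦
    abs_max_le_max_abs_abs.trans (max_le (hu.2.2 x) (hv.2.2 x))⟩

lemma inf (hu : InKa a u) (hv : InKa a v) : InKa a (u ⊓ v) := by
  rw [inKa_iff] at *
  exact ⟨hu.1.inf hv.1, by simp [hu.2.1, hv.2.1], fun x ↦
    abs_min_le_max_abs_abs.trans (max_le (hu.2.2 x) (hv.2.2 x))⟩

end InKa

section Minimizer

variable {V u : ℝ → ℝ} {k a : ℝ}

lemma le_expDecay_of_isMinOn_IV (hV : MemLp V ⊤) (hk : 0 ≤ k) (hkV : ∀ᵐ x, k ^ 2 ≤ V x)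
    (hu : InKa a u) (hmin : IsMinOn (IV V) {v | InKa a v} u) : u ≤ expDecay k a := by
  rcases hk.eq_or_lt with rfl | hk
  · exact fun x ↦ by simpa [expDecay] using (abs_le.1 ((inKa_iff.1 hu).2.2 x)).2
  have hw := inKa_expDecay hk a
  have hsup : IV V (u ⊔ expDecay k a) ≤ IV V (expDecay k a) := by
    linarith [IV_sup_add_IV_inf hV hu.1 hw.1, isMinOn_iff.1 hmin _ (hu.inf hw)]
  refine sup_eq_right.1 (eq_expDecay_of_IV_le hk hV ?_ (hu.1.sup hw.1) (hu.sup hw).2.1 ?_ hsup)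
  · exact hkV.mono fun x hx ↦ (sq_nonneg k).trans hx
  · exact hkV.mono fun x hx ↦ mul_nonneg (sub_nonneg.2 hx) (sub_nonneg.2 le_sup_right)

lemma expDecay_le_of_isMinOn_IV_of_pos (hV : MemLp V ⊤) (hV0 : 0 ≤ᵐ[volume] V) (hk : 0 < k)
    (hVk : ∀ᵐ x, V x ≤ k ^ 2) (hu : InKa a u) (hmin : IsMinOn (IV V) {v | InKa a v} u) :
    expDecay k a ≤ u := by
  have hw := inKa_expDecay hk a
  have hinf : IV V (u ⊓ expDecay k a) ≤ IV V (expDecay k a) := by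
    linarith [IV_sup_add_IV_inf hV hu.1 hw.1, isMinOn_iff.1 hmin _ (hu.sup hw)]
  refine inf_eq_right.1 (eq_expDecay_of_IV_le hk hV hV0 (hu.1.inf hw.1) (hu.inf hw).2.1 ?_ hinf)
  exact hVk.mono fun x hx ↦
    mul_nonneg_of_nonpos_of_nonpos (sub_nonpos.2 hx) (sub_nonpos.2 inf_le_right)

lemma expDecay_le_of_isMinOn_IV (hV : MemLp V ⊤) (hV0 : 0 ≤ᵐ[volume] V) (hk : 0 ≤ k)
    (hVk : ∀ᵐ x, V x ≤ k ^ 2) (hu : InKa a u) (hmin : IsMinOn (IV V) {v | InKa a v} u) :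
    expDecay k a ≤ u := by
  intro x
  have hcont : Continuous fun l ↦ expDecay l a x := by unfold expDecay; fun_prop
  refine le_of_tendsto (hcont.continuousWithinAt (s := Set.Ioi k) (x := k)) ?_
  filter_upwards [self_mem_nhdsWithin] with l (hl : k < l)
  refine expDecay_le_of_isMinOn_IV_of_pos hV hV0 (hk.trans_lt hl) ?_ hu hmin x
  exact hVk.mono fun y hy ↦ hy.trans (by gcongr)

end Minimizer

section EssentialBounds

variable {α : Type*} [MeasurableSpace α] {μ : Measure α} {f : α → ℝ}

lemma ae_essInf_le_of_memLp_top (hf : MemLp f ⊤ μ) : ∀ᵐ x ∂μ, essInf f μ ≤ f x :=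
  ae_essInf_le ⟨-lpNorm f ⊤ μ, (ae_le_lpNorm_exponent_top hf).mono fun _ hx ↦ (abs_le.1 hx).1⟩

lemma ae_le_essSup_of_memLp_top (hf : MemLp f ⊤ μ) : ∀ᵐ x ∂μ, f x ≤ essSup f μ :=
  ae_le_essSup ⟨lpNorm f ⊤ μ, (ae_le_lpNorm_exponent_top hf).mono fun _ hx ↦ (abs_le.1 hx).2⟩

end EssentialBounds

theorem minimizer_exp_bounds_general (V : ℝ → ℝ) (hV : MemLp V ⊤ (volume : Measure ℝ))
    (hV0 : 0 ≤ essInf V (volume : Measure ℝ)) (a : ℝ) (ua : ℝ → ℝ) (hua : InKa a ua)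
    (hmin : ∀ u : ℝ → ℝ, InKa a u → IV V ua ≤ IV V u) (x : ℝ) :
    Real.exp (-(Real.sqrt (essSup V (volume : Measure ℝ))) * |x - a|) ≤ ua x ∧
      ua x ≤ Real.exp (-(Real.sqrt (essInf V (volume : Measure ℝ))) * |x - a|) := by
  have hinf := ae_essInf_le_of_memLp_top hV
  have hsup := ae_le_essSup_of_memLp_top hV
  have hV_nonneg : 0 ≤ᵐ[volume] V := hinf.mono fun y hy ↦ hV0.trans hy
  have hsup0 : 0 ≤ essSup V volume := by
    obtain ⟨y, hy, hy'⟩ := (hV_nonneg.and hsup).exists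
    exact hy.trans hy'
  constructor
  · exact expDecay_le_of_isMinOn_IV hV hV_nonneg (Real.sqrt_nonneg _)
      (by simpa only [Real.sq_sqrt hsup0] using hsup) hua hmin x
  · exact le_expDecay_of_isMinOn_IV hV (Real.sqrt_nonneg _)
      (by simpa only [Real.sq_sqrt hV0] using hinf) hua hmin x

/-- **Pointwise exponential bounds on the minimizer.** For `V ∈ L^∞(ℝ)` with
`v₀ := ess inf V > 0`, `v₁ := ess sup V`, and `u_a` the minimizer of `‖·‖_V²` over `K_a`:
`e^{-√v₁ |x-a|} ≤ u_a(x) ≤ e^{-√v₀ |x-a|}` for all `x ∈ ℝ`. -/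
theorem minimizer_exp_bounds (V : ℝ → ℝ) (hV : MemLp V ⊤ (volume : Measure ℝ))
    (hpos : 0 < essInf V (volume : Measure ℝ)) (a : ℝ)
    (ua : ℝ → ℝ) (hua : InKa a ua)
    (hmin : ∀ u : ℝ → ℝ, InKa a u → IV V ua ≤ IV V u) :
    ∀ x : ℝ,
      Real.exp (-(Real.sqrt (essSup V (volume : Measure ℝ))) * |x - a|) ≤ ua x ∧
      ua x ≤ Real.exp (-(Real.sqrt (essInf V (volume : Measure ℝ))) * |x - a|) := by
  exact minimizer_exp_bounds_general V hV hpos.le a ua hua hmin
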